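/- arXiv:2102.07593 — 2 statements merged into one kernel-verified Lean document; each statement's English description precedes it below -/
import Mathlib

section
/- Fix m, n ≥ 1 and smooth real-valued functions ρ_a^μ, R^{a|μ}, f_{ab}^c, C_c^{ab} on ℝ^m (base indices μ, ν, λ in Fin m, fibre indices a, b, c, d, e in Fin n, repeated indices summed), with f_{ab}^c = −f_{ba}^c and C_c^{ab} = −C_c^{ba}. Assume the Lie bialgebroid constraints: (C1) ρ_a^λ ∂_λ ρ_b^μ − ρ_b^λ ∂_λ ρ_a^μ = ρ_c^μ f_{ab}^c; (C2) Alt_{abc}[ ρ_a^λ ∂_λ f_{bc}^d − f_{ea}^d f_{bc}^e ] = 0; (C3) R^{a|λ} ∂_λ R^{b|μ} − R^{b|λ} ∂_λ R^{a|μ} = R^{c|μ} C_c^{ab}; (C4) Alt^{abc}[ R^{a|λ} ∂_λ C_d^{bc} − C_d^{ea} C_e^{bc} ] = 0; (C5) R^{a|μ} ρ_a^ν + R^{a|ν} ρ_a^μ = 0; (C6) ρ_a^λ ∂_λ R^{b|μ} − R^{b|λ} ∂_λ ρ_a^μ = ρ_c^μ C_a^{bc} + R^{c|μ} f_{ca}^b;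 (C7) Alt_{ab}[ρ_a^λ ∂_λ C_b^{cd}] + Alt^{cd}[R^{c|λ} ∂_λ f_{ab}^d] + 2·Alt_{ab}Alt^{cd}[f_{ea}^c C_b^{de}] − (1/2) f_{ab}^e C_e^{cd} = 0. Define π^{μν} := Σ_a R^{a|μ} ρ_a^ν. Then π^{μν} = −π^{νμ}, and the bracket {f,g} := Σ π^{μν} ∂_μ f ∂_ν g on smooth functions is antisymmetric, a derivation in each argument, and satisfies the Jacobi identity {f,{g,h}} + {g,{h,f}} + {h,{f,g}} = 0; i.e. the base ℝ^m carries a canonical Poisson bracket. -/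
open scoped BigOperators

/-- Partial derivative in the `μ`-th coordinate direction of `ℝ^m`. -/
noncomputable def pd {m : ℕ} (μ : Fin m) (g : (Fin m → ℝ) → ℝ) : (Fin m → ℝ) → ℝ :=
  fun x => fderiv ℝ g x (Pi.single μ 1)

/-- Weight-one antisymmetrization of `F` over two indices. -/
noncomputable def alt2 {α : Type*} (F : α → α → ℝ) (a b : α) : ℝ :=
  (2 : ℝ)⁻¹ * (F a b - F b a)

/-- Weight-one antisymmetrization of `F` over three indices. -/
noncomputable def alt3 {α : Type*} (F : α → α → α → ℝ) (a b c : α) : ℝ :=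
  (6 : ℝ)⁻¹ * ∑ σ : Equiv.Perm (Fin 3),
    ((Equiv.Perm.sign σ : ℤ) : ℝ) *
      F (![a, b, c] (σ 0)) (![a, b, c] (σ 1)) (![a, b, c] (σ 2))

/-- The bracket `{f,g} := Σ_{μ,ν} π^{μν} ∂_μ f ∂_ν g` attached to a bivector `π` on `ℝ^m`. -/
noncomputable def pBracket {m : ℕ} (π : Fin m → Fin m → (Fin m → ℝ) → ℝ)
    (f g : (Fin m → ℝ) → ℝ) : (Fin m → ℝ) → ℝ :=
  fun x => ∑ μ : Fin m, ∑ ν : Fin m, π μ ν x * pd μ f x * pd ν g x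

/-!
The components `R^{a|μ}`, `ρ_a^μ` define derivations `R^a = R^{a|μ} ∂_μ` and `ρ_a = ρ_a^μ ∂_μ` of
the algebra of smooth functions, and the bracket of `π` is `{g, h} = ∑ a, R^a(g) ρ_a(h)`. The
constraints (C1), (C3), (C6) compute the commutators `[ρ_a, ρ_b]`, `[R^a, R^b]`, `[ρ_a, R^b]`, while
(C5) says that the Hamiltonian derivation `{g, ·}` equals both `∑ a, R^a(g) ρ_a` and
`-∑ a, ρ_a(g) R^a`. Choosing between these two expressions term by term, the Jacobiator of `g, h, k`
becomes
`R^a(g) R^b(h) [ρ_a, ρ_b](k) + ρ_a(h) ρ_b(k) [R^a, R^b](g) + R^a(g) ρ_b(k) [ρ_a, R^b](h)`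
(summed over `a, b`), with no second derivatives left; the structure functions then cancel in pairs.
-/

section Derivations

variable {S A : Type*} [CommRing S] [CommRing A] [Algebra S A]

theorem derivation_sum_apply {ι : Type*} (s : Finset ι) (D : ι → Derivation S A A) (g : A) :
    (∑ i ∈ s, D i) g = ∑ i ∈ s, D i g := by
  rw [← Derivation.coeFnAddMonoidHom_apply, map_sum, Finset.sum_apply]
  rfl

theorem derivation_linearCombination_apply {ι : Type*} [Fintype ι] (D : ι → Derivation S A A)
    (v : ι → A) (g : A) : Fintype.linearCombination A D v g = ∑ i, v i * D i g := by
  simp [Fintype.linearCombination_apply, derivation_sum_apply]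

theorem lie_linearCombination_of_commute {κ : Type*} [Fintype κ] (D : κ → Derivation S A A)
    (hD : ∀ i j, ⁅D i, D j⁆ = 0) (v w : κ → A) :
    ⁅Fintype.linearCombination A D v, Fintype.linearCombination A D w⁆ =
      Fintype.linearCombination A D fun i =>
        Fintype.linearCombination A D v (w i) - Fintype.linearCombination A D w (v i) := by
  have commute (i j g) : D i (D j g) = D j (D i g) := by
    rw [← sub_eq_zero, ← Derivation.commutator_apply, hD, Derivation.zero_apply]
  have comp_apply (v w : κ → A) (g : A) :
      Fintype.linearCombination A D v (Fintype.linearCombination A D w g) =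
        ∑ j, Fintype.linearCombination A D v (w j) * D j g
          + ∑ j, ∑ i, v i * w j * D i (D j g) := by
    rw [derivation_linearCombination_apply D w, map_sum, ← Finset.sum_add_distrib]
    refine Finset.sum_congr rfl fun j _ => ?_
    rw [Derivation.leibniz, derivation_linearCombination_apply D v (D j g), smul_eq_mul,
      smul_eq_mul, Finset.mul_sum, mul_comm (D j g), add_comm]
    simp only [mul_left_comm (w j), mul_assoc]
  have second_order_symm (g : A) :
      ∑ j, ∑ i, v i * w j * D i (D j g) = ∑ j, ∑ i, w i * v j * D i (D j g) := by
    rw [Finset.sum_comm]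
    simp only [commute, mul_comm]
  ext g
  rw [Derivation.commutator_apply, comp_apply, comp_apply, second_order_symm,
    derivation_linearCombination_apply D, add_sub_add_right_eq_sub, ← Finset.sum_sub_distrib]
  simp only [sub_mul]

variable {ι : Type*} [Fintype ι] (R ρ : ι → Derivation S A A)

/-- The Hamiltonian derivation `{g, ·}` of the bracket `{g, h} = ∑ a, R a g * ρ a h` determined by
two families of derivations, the anchors of a Lie bialgebroid in a local frame. -/
def hamiltonianDerivation (g : A) : Derivation S A A :=
  ∑ a, R a g • ρ a

theorem hamiltonianDerivation_apply (g h : A) :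
    hamiltonianDerivation R ρ g h = ∑ a, R a g * ρ a h := by
  simp [hamiltonianDerivation, derivation_sum_apply]

theorem hamiltonianDerivation_comp_apply (g h k : A) :
    hamiltonianDerivation R ρ g (hamiltonianDerivation R ρ h k) =
      ∑ b, R b h * hamiltonianDerivation R ρ g (ρ b k)
        + ∑ b, ρ b k * hamiltonianDerivation R ρ g (R b h) := by
  rw [hamiltonianDerivation_apply R ρ h, map_sum]
  simp only [Derivation.leibniz, smul_eq_mul, Finset.sum_add_distrib]

variable {R ρ}

theorem hamiltonianDerivation_apply_of_antisymm
    (anti : ∀ g h, hamiltonianDerivation R ρ g h = -hamiltonianDerivation R ρ h g) (g h : A) :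
    hamiltonianDerivation R ρ g h = -∑ a, ρ a g * R a h := by
  simp only [anti g, hamiltonianDerivation_apply, mul_comm]

theorem hamiltonianDerivation_jacobiator_eq_lie
    (anti : ∀ g h, hamiltonianDerivation R ρ g h = -hamiltonianDerivation R ρ h g) (g h k : A) :
    hamiltonianDerivation R ρ g (hamiltonianDerivation R ρ h k)
        + hamiltonianDerivation R ρ k (hamiltonianDerivation R ρ g h)
        - hamiltonianDerivation R ρ h (hamiltonianDerivation R ρ g k) =
      ∑ a, ∑ b, (R a g * R b h * ⁅ρ a, ρ b⁆ k + ρ a h * ρ b k * ⁅R a, R b⁆ g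
        + R a g * ρ b k * ⁅ρ a, R b⁆ h) := by
  have ρρ_terms : ∑ b, R b h * hamiltonianDerivation R ρ g (ρ b k)
        - ∑ b, R b g * hamiltonianDerivation R ρ h (ρ b k) =
      ∑ a, ∑ b, R a g * R b h * ⁅ρ a, ρ b⁆ k := by
    simp only [hamiltonianDerivation_apply, Finset.mul_sum]
    rw [Finset.sum_comm]
    simp only [← Finset.sum_sub_distrib]
    refine Finset.sum_congr rfl fun a _ => Finset.sum_congr rfl fun b _ => ?_
    rw [Derivation.commutator_apply]
    ring
  have RR_terms : ∑ b, ρ b h * hamiltonianDerivation R ρ k (R b g)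
        - ∑ b, ρ b k * hamiltonianDerivation R ρ h (R b g) =
      ∑ a, ∑ b, ρ a h * ρ b k * ⁅R a, R b⁆ g := by
    simp only [hamiltonianDerivation_apply_of_antisymm anti, mul_neg, Finset.mul_sum,
      Finset.sum_neg_distrib]
    rw [sub_neg_eq_add, neg_add_eq_sub, Finset.sum_comm]
    simp only [← Finset.sum_sub_distrib]
    refine Finset.sum_congr rfl fun a _ => Finset.sum_congr rfl fun b _ => ?_
    rw [Derivation.commutator_apply]
    ring
  have ρR_terms : ∑ b, ρ b k * hamiltonianDerivation R ρ g (R b h)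
        + ∑ b, R b g * hamiltonianDerivation R ρ k (ρ b h) =
      ∑ a, ∑ b, R a g * ρ b k * ⁅ρ a, R b⁆ h := by
    simp only [hamiltonianDerivation_apply R ρ g, hamiltonianDerivation_apply_of_antisymm anti k,
      mul_neg, Finset.mul_sum, Finset.sum_neg_distrib]
    rw [← sub_eq_add_neg, Finset.sum_comm]
    simp only [← Finset.sum_sub_distrib]
    refine Finset.sum_congr rfl fun a _ => Finset.sum_congr rfl fun b _ => ?_
    rw [Derivation.commutator_apply]
    ring
  simp only [Finset.sum_add_distrib]
  rw [← ρρ_terms, ← RR_terms, ← ρR_terms, hamiltonianDerivation_comp_apply R ρ g h,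
    hamiltonianDerivation_comp_apply R ρ k g, hamiltonianDerivation_comp_apply R ρ h g]
  ring

theorem hamiltonianDerivation_jacobi
    (anti : ∀ g h, hamiltonianDerivation R ρ g h = -hamiltonianDerivation R ρ h g)
    {f C : ι → ι → ι → A}
    (hρ : ∀ a b, ⁅ρ a, ρ b⁆ = ∑ c, f a b c • ρ c)
    (hR : ∀ a b, ⁅R a, R b⁆ = ∑ c, C c a b • R c)
    (hρR : ∀ a b, ⁅ρ a, R b⁆ = ∑ c, (C a b c • ρ c + f c a b • R c)) (g h k : A) :
    hamiltonianDerivation R ρ g (hamiltonianDerivation R ρ h k)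
      + hamiltonianDerivation R ρ h (hamiltonianDerivation R ρ k g)
      + hamiltonianDerivation R ρ k (hamiltonianDerivation R ρ g h) = 0 := by
  have lie_ρ_apply (a b) : ⁅ρ a, ρ b⁆ k = -∑ c, f b a c * ρ c k := by
    rw [← lie_skew, hρ]
    simp [derivation_sum_apply]
  have lie_R_apply (a b) : ⁅R a, R b⁆ g = -∑ c, C c b a * R c g := by
    rw [← lie_skew, hR]
    simp [derivation_sum_apply]
  have f_terms : ∑ a, ∑ b, R a g * R b h * ⁅ρ a, ρ b⁆ k =
      -∑ a, ∑ b, R a g * ρ b k * ∑ c, f c a b * R c h := by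
    simp only [lie_ρ_apply, mul_neg, Finset.sum_neg_distrib, Finset.mul_sum]
    congr! 2 with a
    rw [Finset.sum_comm]
    congr! 2
    ring
  have C_terms : ∑ a, ∑ b, ρ a h * ρ b k * ⁅R a, R b⁆ g =
      -∑ a, ∑ b, R a g * ρ b k * ∑ c, C a b c * ρ c h := by
    simp only [lie_R_apply, mul_neg, Finset.sum_neg_distrib, Finset.mul_sum]
    rw [Finset.sum_comm, Finset.sum_comm (f := fun a b => ∑ c, R a g * ρ b k * _)]
    congr! 2 with b
    rw [Finset.sum_comm]
    congr! 2
    ring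
  have jacobiator := hamiltonianDerivation_jacobiator_eq_lie anti g h k
  rw [anti k g, map_neg, add_right_comm, ← sub_eq_add_neg, jacobiator]
  simp only [Finset.sum_add_distrib, f_terms, C_terms, hρR, derivation_sum_apply,
    Derivation.add_apply, Derivation.smul_apply, smul_eq_mul, mul_add]
  ring

end Derivations

section SmoothFunctions

variable {m : ℕ}

/-- The algebra of smooth functions on `ℝ^m`, as a subalgebra of all functions so that evaluation
at a point and the coordinate derivatives `pd` apply to its elements directly. -/
def smoothFunctions (m : ℕ) : Subalgebra ℝ ((Fin m → ℝ) → ℝ) where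
  carrier := {g | ContDiff ℝ (⊤ : ℕ∞) g}
  mul_mem' hg hh := hg.out.mul hh.out
  add_mem' hg hh := hg.out.add hh.out
  algebraMap_mem' _ := Set.mem_ofPred.2 contDiff_const

theorem smoothFunctions.contDiff (g : smoothFunctions m) : ContDiff ℝ (⊤ : ℕ∞) g.1 :=
  g.2

theorem smoothFunctions.differentiableAt (g : smoothFunctions m) (x : Fin m → ℝ) :
    DifferentiableAt ℝ g.1 x :=
  (contDiff g).differentiable (by simp) x

theorem pd_mul (μ : Fin m) {g h : (Fin m → ℝ) → ℝ} {x : Fin m → ℝ}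
    (hg : DifferentiableAt ℝ g x) (hh : DifferentiableAt ℝ h x) :
    pd μ (fun y => g y * h y) x = pd μ g x * h x + g x * pd μ h x := by
  simp [pd, fderiv_fun_mul hg hh, add_comm, mul_comm]

theorem contDiff_pd (μ : Fin m) {g : (Fin m → ℝ) → ℝ} (hg : ContDiff ℝ (⊤ : ℕ∞) g) :
    ContDiff ℝ (⊤ : ℕ∞) (pd μ g) :=
  (hg.fderiv_right (by simp)).clm_apply contDiff_const

theorem pd_comm (μ ν : Fin m) {g : (Fin m → ℝ) → ℝ} (hg : ContDiff ℝ 2 g) :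
    pd μ (pd ν g) = pd ν (pd μ g) := by
  funext x
  have differentiable_fderiv : DifferentiableAt ℝ (fderiv ℝ g) x :=
    (hg.fderiv_right (m := 1) le_rfl).differentiable one_ne_zero x
  have pd_pd (μ ν : Fin m) :
      pd μ (pd ν g) x = fderiv ℝ (fderiv ℝ g) x (Pi.single μ 1) (Pi.single ν 1) := by
    unfold pd
    simp [fderiv_clm_apply differentiable_fderiv (differentiableAt_const _)]
  rw [pd_pd, pd_pd]
  exact hg.contDiffAt.isSymmSndFDerivAt (by simp) _ _

open smoothFunctions in
/-- The partial derivative `pd μ` as a derivation of the algebra of smooth functions. -/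
noncomputable def partialDerivation (μ : Fin m) :
    Derivation ℝ (smoothFunctions m) (smoothFunctions m) :=
  .mk'
    { toFun g := ⟨pd μ g, contDiff_pd μ (contDiff g)⟩
      map_add' g h := Subtype.ext <| funext fun x => by
        simp [pd, fderiv_add (differentiableAt g x) (differentiableAt h x)]
      map_smul' c g := Subtype.ext <| funext fun x => by
        simp [pd, fderiv_const_smul (differentiableAt g x)] }
    fun g h => Subtype.ext <| funext fun x =>
      (pd_mul μ (differentiableAt g x) (differentiableAt h x)).trans (by simp [add_comm, mul_comm])

theorem coe_partialDerivation (μ : Fin m) (g : smoothFunctions m) :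
    (partialDerivation μ g : (Fin m → ℝ) → ℝ) = pd μ g :=
  rfl

theorem lie_partialDerivation (μ ν : Fin m) :
    ⁅partialDerivation μ, partialDerivation ν⁆ = 0 := by
  ext1 g
  rw [Derivation.commutator_apply, Derivation.zero_apply, sub_eq_zero]
  exact Subtype.ext (pd_comm μ ν ((smoothFunctions.contDiff g).of_le (WithTop.coe_le_coe.2 le_top)))

/-- The vector field with components `v μ`, acting on smooth functions. -/
noncomputable def vectorField :
    (Fin m → smoothFunctions m) →ₗ[smoothFunctions m]
      Derivation ℝ (smoothFunctions m) (smoothFunctions m) :=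
  Fintype.linearCombination (smoothFunctions m) partialDerivation

theorem vectorField_apply_apply (v : Fin m → smoothFunctions m) (g : smoothFunctions m)
    (x : Fin m → ℝ) : (vectorField v g).1 x = ∑ μ, (v μ).1 x * pd μ g x := by
  simp [vectorField, derivation_linearCombination_apply, coe_partialDerivation]

theorem lie_vectorField (v w : Fin m → smoothFunctions m) :
    ⁅vectorField v, vectorField w⁆ =
      vectorField fun μ => vectorField v (w μ) - vectorField w (v μ) :=
  lie_linearCombination_of_commute (A := smoothFunctions m) _ lie_partialDerivation v w

theorem lie_vectorField_eq {v w u : Fin m → smoothFunctions m}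
    (h : ∀ μ x, ∑ l, ((v l).1 x * pd l (w μ) x - (w l).1 x * pd l (v μ) x) = (u μ).1 x) :
    ⁅vectorField v, vectorField w⁆ = vectorField u := by
  rw [lie_vectorField]
  congr! 1
  funext μ
  refine Subtype.ext (funext fun x => ?_)
  simp [vectorField_apply_apply, ← h, Finset.sum_sub_distrib]

end SmoothFunctions

section PoissonBivector

variable {m : ℕ}

/-- Poisson bivectors on `ℝ^m`, characterised by the bracket of smooth functions they define.
Smoothness of the components `π μ ν` is not part of the definition. -/
structure IsPoissonBivector (π : Fin m → Fin m → (Fin m → ℝ) → ℝ) : Prop where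
  antisymm (μ ν : Fin m) (x : Fin m → ℝ) : π μ ν x = -π ν μ x
  bracket_antisymm (g h : (Fin m → ℝ) → ℝ) :
    ContDiff ℝ (⊤ : ℕ∞) g → ContDiff ℝ (⊤ : ℕ∞) h → ∀ x, pBracket π g h x = -pBracket π h g x
  bracket_mul_right (g h k : (Fin m → ℝ) → ℝ) :
    ContDiff ℝ (⊤ : ℕ∞) g → ContDiff ℝ (⊤ : ℕ∞) h → ContDiff ℝ (⊤ : ℕ∞) k →
    ∀ x, pBracket π g (fun y => h y * k y) x = pBracket π g h x * k x + h x * pBracket π g k x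
  bracket_mul_left (g h k : (Fin m → ℝ) → ℝ) :
    ContDiff ℝ (⊤ : ℕ∞) g → ContDiff ℝ (⊤ : ℕ∞) h → ContDiff ℝ (⊤ : ℕ∞) k →
    ∀ x, pBracket π (fun y => g y * h y) k x = pBracket π g k x * h x + g x * pBracket π h k x
  jacobi (g h k : (Fin m → ℝ) → ℝ) :
    ContDiff ℝ (⊤ : ℕ∞) g → ContDiff ℝ (⊤ : ℕ∞) h → ContDiff ℝ (⊤ : ℕ∞) k →
    ∀ x, pBracket π g (pBracket π h k) x + pBracket π h (pBracket π k g) x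
      + pBracket π k (pBracket π g h) x = 0

theorem pBracket_antisymm {π : Fin m → Fin m → (Fin m → ℝ) → ℝ}
    (hπ : ∀ μ ν x, π μ ν x = -π ν μ x) (g h : (Fin m → ℝ) → ℝ) (x : Fin m → ℝ) :
    pBracket π g h x = -pBracket π h g x := by
  unfold pBracket
  rw [Finset.sum_comm]
  simp only [← Finset.sum_neg_distrib]
  congr! 2 with ν _ μ
  rw [hπ]
  ring

theorem pBracket_mul_right (π : Fin m → Fin m → (Fin m → ℝ) → ℝ) (g : (Fin m → ℝ) → ℝ)
    {h k : (Fin m → ℝ) → ℝ} {x : Fin m → ℝ} (hh : DifferentiableAt ℝ h x)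
    (hk : DifferentiableAt ℝ k x) :
    pBracket π g (fun y => h y * k y) x = pBracket π g h x * k x + h x * pBracket π g k x := by
  simp only [pBracket, pd_mul _ hh hk, Finset.sum_mul _ _ (k x), Finset.mul_sum _ _ (h x),
    ← Finset.sum_add_distrib]
  refine Finset.sum_congr rfl fun μ _ => Finset.sum_congr rfl fun ν _ => ?_
  ring

theorem pBracket_mul_left (π : Fin m → Fin m → (Fin m → ℝ) → ℝ) {g h : (Fin m → ℝ) → ℝ}
    (k : (Fin m → ℝ) → ℝ) {x : Fin m → ℝ} (hg : DifferentiableAt ℝ g x)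
    (hh : DifferentiableAt ℝ h x) :
    pBracket π (fun y => g y * h y) k x = pBracket π g k x * h x + g x * pBracket π h k x := by
  simp only [pBracket, pd_mul _ hg hh, Finset.sum_mul _ _ (h x), Finset.mul_sum _ _ (g x),
    ← Finset.sum_add_distrib]
  refine Finset.sum_congr rfl fun μ _ => Finset.sum_congr rfl fun ν _ => ?_
  ring

variable {ι : Type*} [Fintype ι]

theorem coe_hamiltonianDerivation_vectorField (R ρ : ι → Fin m → smoothFunctions m)
    (g h : smoothFunctions m) :
    (hamiltonianDerivation (fun a => vectorField (R a)) (fun a => vectorField (ρ a)) g h).1 =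
      pBracket (fun μ ν y => ∑ a, (R a μ).1 y * (ρ a ν).1 y) g h := by
  funext x
  calc
    _ = ∑ a, (∑ μ, (R a μ).1 x * pd μ g x) * ∑ ν, (ρ a ν).1 x * pd ν h x := by
      simp [hamiltonianDerivation_apply, vectorField_apply_apply]
    _ = ∑ a, ∑ μ, ∑ ν, (R a μ).1 x * (ρ a ν).1 x * pd μ g x * pd ν h x := by
      simp only [Finset.sum_mul_sum, mul_mul_mul_comm _ (pd _ _ x), mul_assoc]
    _ = ∑ μ, ∑ ν, ∑ a, (R a μ).1 x * (ρ a ν).1 x * pd μ g x * pd ν h x := by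
      rw [Finset.sum_comm]
      exact Finset.sum_congr rfl fun μ _ => Finset.sum_comm
    _ = _ := by simp only [pBracket, Finset.sum_mul]

theorem isPoissonBivector_of_lie_vectorField {R ρ : ι → Fin m → smoothFunctions m}
    {f C : ι → ι → ι → smoothFunctions m}
    (hπ : ∀ μ ν x, ∑ a, (R a μ).1 x * (ρ a ν).1 x = -∑ a, (R a ν).1 x * (ρ a μ).1 x)
    (hρ : ∀ a b, ⁅vectorField (ρ a), vectorField (ρ b)⁆ = ∑ c, f a b c • vectorField (ρ c))
    (hR : ∀ a b, ⁅vectorField (R a), vectorField (R b)⁆ = ∑ c, C c a b • vectorField (R c))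
    (hρR : ∀ a b, ⁅vectorField (ρ a), vectorField (R b)⁆ =
      ∑ c, (C a b c • vectorField (ρ c) + f c a b • vectorField (R c))) :
    IsPoissonBivector fun μ ν y => ∑ a, (R a μ).1 y * (ρ a ν).1 y := by
  have coe_bracket := coe_hamiltonianDerivation_vectorField R ρ
  have anti (g h : smoothFunctions m) :
      hamiltonianDerivation (fun a => vectorField (R a)) (fun a => vectorField (ρ a)) g h =
        -hamiltonianDerivation (fun a => vectorField (R a)) (fun a => vectorField (ρ a)) h g := by
    refine Subtype.ext (funext fun x => ?_)
    rw [NegMemClass.coe_neg, coe_bracket, coe_bracket]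
    exact pBracket_antisymm hπ g h x
  exact
    { antisymm := hπ
      bracket_antisymm g h _ _ := pBracket_antisymm hπ g h
      bracket_mul_right g _ _ _ hh hk x :=
        pBracket_mul_right _ g (hh.differentiable (by simp) x) (hk.differentiable (by simp) x)
      bracket_mul_left _ _ k hg hh _ x :=
        pBracket_mul_left _ k (hg.differentiable (by simp) x) (hh.differentiable (by simp) x)
      jacobi g h k hg hh hk x := by
        lift g to smoothFunctions m using hg
        lift h to smoothFunctions m using hh
        lift k to smoothFunctions m using hk
        have jacobi := congrArg (·.1 x) (hamiltonianDerivation_jacobi anti hρ hR hρR g h k)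
        simpa [coe_bracket] using jacobi }

theorem lie_bialgebroid_base_poisson_general {R ρ : ι → Fin m → (Fin m → ℝ) → ℝ}
    {f C : ι → ι → ι → (Fin m → ℝ) → ℝ}
    (hρ : ∀ a μ, ContDiff ℝ (⊤ : ℕ∞) (ρ a μ)) (hR : ∀ a μ, ContDiff ℝ (⊤ : ℕ∞) (R a μ))
    (hf : ∀ a b c, ContDiff ℝ (⊤ : ℕ∞) (f a b c)) (hC : ∀ c a b, ContDiff ℝ (⊤ : ℕ∞) (C c a b))
    (hC1 : ∀ a b μ x,
      (∑ l, (ρ a l x * pd l (ρ b μ) x - ρ b l x * pd l (ρ a μ) x)) = ∑ c, ρ c μ x * f a b c x)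
    (hC3 : ∀ a b μ x,
      (∑ l, (R a l x * pd l (R b μ) x - R b l x * pd l (R a μ) x)) = ∑ c, R c μ x * C c a b x)
    (hC5 : ∀ μ ν x, ∑ a, (R a μ x * ρ a ν x + R a ν x * ρ a μ x) = 0)
    (hC6 : ∀ a b μ x,
      (∑ l, (ρ a l x * pd l (R b μ) x - R b l x * pd l (ρ a μ) x)) =
        ∑ c, (ρ c μ x * C a b c x + R c μ x * f c a b x)) :
    IsPoissonBivector fun μ ν y => ∑ a, R a μ y * ρ a ν y := by
  lift ρ to ι → Fin m → smoothFunctions m using hρ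
  lift R to ι → Fin m → smoothFunctions m using hR
  lift f to ι → ι → ι → smoothFunctions m using hf
  lift C to ι → ι → ι → smoothFunctions m using hC
  refine isPoissonBivector_of_lie_vectorField (f := f) (C := C) (fun μ ν x => ?_)
    (fun a b => ?_) (fun a b => ?_) (fun a b => ?_)
  · rw [eq_neg_iff_add_eq_zero, ← Finset.sum_add_distrib, hC5]
  · rw [lie_vectorField_eq (u := ∑ c, f a b c • ρ c)]
    · simp
    · exact fun μ x => (hC1 a b μ x).trans (by simp [mul_comm])
  · rw [lie_vectorField_eq (u := ∑ c, C c a b • R c)]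
    · simp
    · exact fun μ x => (hC3 a b μ x).trans (by simp [mul_comm])
  · rw [lie_vectorField_eq (u := ∑ c, (C a b c • ρ c + f c a b • R c))]
    · simp
    · exact fun μ x => (hC6 a b μ x).trans (by simp [mul_comm])

end PoissonBivector

/-- A Lie bialgebroid on the trivial rank-`n` bundle over `ℝ^m`, given in components by
anchors `ρ_a^μ`, `R^{a|μ}` and structure functions `f_{ab}^c`, `C_c^{ab}` subject to the
constraints (C1)–(C7), induces a canonical Poisson bracket on the base `ℝ^m` via the
bivector `π^{μν} := Σ_a R^{a|μ} ρ_a^ν`: the bivector is antisymmetric, and the associated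
bracket on smooth functions is antisymmetric, a derivation in each argument, and satisfies
the Jacobi identity. -/
theorem lie_bialgebroid_base_poisson
    (m n : ℕ) (hm : 1 ≤ m) (hn : 1 ≤ n)
    (ρ R : Fin n → Fin m → (Fin m → ℝ) → ℝ)
    (f C : Fin n → Fin n → Fin n → (Fin m → ℝ) → ℝ)
    (hρ : ∀ a μ, ContDiff ℝ (⊤ : ℕ∞) (ρ a μ)) (hR : ∀ a μ, ContDiff ℝ (⊤ : ℕ∞) (R a μ))
    (hf : ∀ a b c, ContDiff ℝ (⊤ : ℕ∞) (f a b c)) (hC : ∀ c a b, ContDiff ℝ (⊤ : ℕ∞) (C c a b))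
    (hfanti : ∀ a b c x, f a b c x = - f b a c x)
    (hCanti : ∀ c a b x, C c a b x = - C c b a x)
    -- (C1)
    (hC1 : ∀ a b μ x,
      (∑ lam : Fin m, (ρ a lam x * pd lam (ρ b μ) x - ρ b lam x * pd lam (ρ a μ) x))
        = ∑ c : Fin n, ρ c μ x * f a b c x)
    -- (C2)
    (hC2 : ∀ a b c d x,
      alt3 (fun a' b' c' =>
        (∑ lam : Fin m, ρ a' lam x * pd lam (f b' c' d) x)
          - ∑ e : Fin n, f e a' d x * f b' c' e x) a b c = 0)
    -- (C3)
    (hC3 : ∀ a b μ x,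
      (∑ lam : Fin m, (R a lam x * pd lam (R b μ) x - R b lam x * pd lam (R a μ) x))
        = ∑ c : Fin n, R c μ x * C c a b x)
    -- (C4)
    (hC4 : ∀ a b c d x,
      alt3 (fun a' b' c' =>
        (∑ lam : Fin m, R a' lam x * pd lam (C d b' c') x)
          - ∑ e : Fin n, C d e a' x * C e b' c' x) a b c = 0)
    -- (C5)
    (hC5 : ∀ μ ν x, ∑ a : Fin n, (R a μ x * ρ a ν x + R a ν x * ρ a μ x) = 0)
    -- (C6)
    (hC6 : ∀ a b μ x,
      (∑ lam : Fin m, (ρ a lam x * pd lam (R b μ) x - R b lam x * pd lam (ρ a μ) x))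
        = ∑ c : Fin n, (ρ c μ x * C a b c x + R c μ x * f c a b x))
    -- (C7)
    (hC7 : ∀ a b c d x,
      alt2 (fun a' b' => ∑ lam : Fin m, ρ a' lam x * pd lam (C b' c d) x) a b
        + alt2 (fun c' d' => ∑ lam : Fin m, R c' lam x * pd lam (f a b d') x) c d
        + 2 * alt2 (fun a' b' =>
            alt2 (fun c' d' => ∑ e : Fin n, f e a' c' x * C b' d' e x) c d) a b
        - (2 : ℝ)⁻¹ * ∑ e : Fin n, f a b e x * C e c d x = 0) :
    -- the bivector π^{μν} := Σ_a R^{a|μ} ρ_a^ν is antisymmetric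
    (∀ μ ν x, (∑ a : Fin n, R a μ x * ρ a ν x) = - ∑ a : Fin n, R a ν x * ρ a μ x)
    -- the associated bracket is antisymmetric on smooth functions
    ∧ (∀ g h : (Fin m → ℝ) → ℝ, ContDiff ℝ (⊤ : ℕ∞) g → ContDiff ℝ (⊤ : ℕ∞) h →
        ∀ x, pBracket (fun μ ν y => ∑ a : Fin n, R a μ y * ρ a ν y) g h x
          = - pBracket (fun μ ν y => ∑ a : Fin n, R a μ y * ρ a ν y) h g x)
    -- it is a derivation in each argument
    ∧ (∀ g h k : (Fin m → ℝ) → ℝ, ContDiff ℝ (⊤ : ℕ∞) g → ContDiff ℝ (⊤ : ℕ∞) h → ContDiff ℝ (⊤ : ℕ∞) k →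
        ∀ x, pBracket (fun μ ν y => ∑ a : Fin n, R a μ y * ρ a ν y) g (fun y => h y * k y) x
          = pBracket (fun μ ν y => ∑ a : Fin n, R a μ y * ρ a ν y) g h x * k x
            + h x * pBracket (fun μ ν y => ∑ a : Fin n, R a μ y * ρ a ν y) g k x)
    ∧ (∀ g h k : (Fin m → ℝ) → ℝ, ContDiff ℝ (⊤ : ℕ∞) g → ContDiff ℝ (⊤ : ℕ∞) h → ContDiff ℝ (⊤ : ℕ∞) k →
        ∀ x, pBracket (fun μ ν y => ∑ a : Fin n, R a μ y * ρ a ν y) (fun y => g y * h y) k x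
          = pBracket (fun μ ν y => ∑ a : Fin n, R a μ y * ρ a ν y) g k x * h x
            + g x * pBracket (fun μ ν y => ∑ a : Fin n, R a μ y * ρ a ν y) h k x)
    -- and it satisfies the Jacobi identity
    ∧ (∀ g h k : (Fin m → ℝ) → ℝ, ContDiff ℝ (⊤ : ℕ∞) g → ContDiff ℝ (⊤ : ℕ∞) h → ContDiff ℝ (⊤ : ℕ∞) k →
        ∀ x, pBracket (fun μ ν y => ∑ a : Fin n, R a μ y * ρ a ν y) g
              (pBracket (fun μ ν y => ∑ a : Fin n, R a μ y * ρ a ν y) h k) x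
          + pBracket (fun μ ν y => ∑ a : Fin n, R a μ y * ρ a ν y) h
              (pBracket (fun μ ν y => ∑ a : Fin n, R a μ y * ρ a ν y) k g) x
          + pBracket (fun μ ν y => ∑ a : Fin n, R a μ y * ρ a ν y) k
              (pBracket (fun μ ν y => ∑ a : Fin n, R a μ y * ρ a ν y) g h) x = 0) := by
  have poisson := lie_bialgebroid_base_poisson_general hρ hR hf hC hC1 hC3 hC5 hC6
  exact ⟨poisson.antisymm, poisson.bracket_antisymm, poisson.bracket_mul_right,
    poisson.bracket_mul_left, poisson.jacobi⟩
end

section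
/- Fix m, n ≥ 1 and smooth real-valued functions ρ_a^μ, R^{a|μ}, f_{ab}^c, C_c^{ab}, φ^{abc}, ψ_{abc} on ℝ^m (base indices μ, ν, λ, ρ in Fin m, fibre indices a, b, c, d, e in Fin n, repeated indices summed), with f_{ab}^c = −f_{ba}^c, C_c^{ab} = −C_c^{ba}, and φ, ψ totally antisymmetric. Assume the nine proto-Lie bialgebroid constraints: (C1) ρ_a^λ ∂_λ ρ_b^μ − ρ_b^λ ∂_λ ρ_a^μ − ρ_c^μ f_{ab}^c + R^{c|μ} ψ_{cab} = 0; (C2) Alt_{abc}[ ρ_a^λ ∂_λ f_{bc}^d − f_{ea}^d f_{bc}^e + (1/3) R^{d|λ} ∂_λ ψ_{abc} − ψ_{eab} C_c^{ed} ] = 0; (C3) R^{a|λ} ∂_λ R^{b|μ} − R^{b|λ} ∂_λ R^{a|μ} − R^{c|μ} C_c^{ab} + ρ_c^μ φ^{cab} = 0; (C4) Alt^{abc}[ R^{a|λ} ∂_λ C_d^{bc} − C_d^{ea} C_e^{bc} + (1/3) ρ_d^λ ∂_λ φ^{abc} − φ^{eab} f_{ed}^c ] = 0; (C5) R^{a|μ}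 ρ_a^ν + R^{a|ν} ρ_a^μ = 0; (C6) ρ_a^λ ∂_λ R^{b|μ} − R^{b|λ} ∂_λ ρ_a^μ − ρ_c^μ C_a^{bc} − R^{c|μ} f_{ca}^b = 0; (C7) Alt_{ab}[ρ_a^λ ∂_λ C_b^{cd}] + Alt^{cd}[R^{c|λ} ∂_λ f_{ab}^d] + 2·Alt_{ab}Alt^{cd}[f_{ea}^c C_b^{de}] − (1/2) f_{ab}^e C_e^{cd} − (1/2) ψ_{eab} φ^{ecd} = 0; (C8) Alt^{abcd}[ (1/3) R^{d|λ} ∂_λ φ^{abc} + (1/2) φ^{eab} C_e^{cd} ] = 0; (C9) Alt_{abcd}[ (1/3) ρ_d^λ ∂_λ ψ_{abc} + (1/2) ψ_{eab} f_{cd}^e ] = 0. Define π^{μν} := Σ_a R^{a|μ} ρ_a^ν (antisymmetric by (C5)). Then the Jacobi identity for π is deformed as: Σ_ρ ( π^{ρλ} ∂_ρ π^{μν} + π^{ρμ} ∂_ρ π^{νλ} + π^{ρν} ∂_ρ π^{λμ} ) = Σ_{a,b,c} ( ψ_{abc} R^{a|λ} R^{b|μ} R^{c|ν} + φ^{abc}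 ρ_a^λ ρ_b^μ ρ_c^ν ) for all λ, μ, ν. -/
open scoped BigOperators

/-- Weight-one antisymmetrization of `F` over four indices. -/
noncomputable def alt4 {α : Type*} (F : α → α → α → α → ℝ) (a b c d : α) : ℝ :=
  (24 : ℝ)⁻¹ * ∑ σ : Equiv.Perm (Fin 4),
    ((Equiv.Perm.sign σ : ℤ) : ℝ) *
      F (![a, b, c, d] (σ 0)) (![a, b, c, d] (σ 1)) (![a, b, c, d] (σ 2)) (![a, b, c, d] (σ 3))

/-!
Contract the three first-order constraints with anchors until only base indices are left: (C1)
with `R R`, (C3) with `ρ ρ` and (C6) with `R ρ`. By (C5) the vector field `∑ a, ρ_a^λ R^a` equals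
`-∑ a, R^{a|λ} ρ_a`, so every derivative term becomes one of two kinds: a derivative of `R` or of
`ρ` along `π^{·λ}`. The contracted (C6) turns the cyclic sum of `π^{ρλ} ∂_ρ π^{μν}` into a cyclic
sum of terms in `f` and `C`, and eliminating all derivatives among one instance of (C1), one
of (C3) and two of (C6) identifies the latter with the terms in `φ` and `ψ`. The exchange
`(ρ, f, ψ) ↔ (R, C, φ)` swaps (C1) with (C3), so both are instances of `AnchorCompatible`.
-/

namespace ProtoLieBialgebroid

section Pointwise

variable {A ι κ : Type*} [CommRing A] [Fintype ι]

/-- The tensor `π^{μν} = ∑ a, u_a^μ v_a^ν` at one point of the base, a bivector for anchors subject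
to (C5). It is defined for arbitrary `u` and `v` so that the Leibniz rule for `π` can be written
with derivatives of the anchors as arguments. -/
def bivector (u v : ι → κ → A) (μ ν : κ) : A :=
  ∑ a, u a μ * v a ν

/-- The constraint (C5) at one point of the base: the image of the cotangent space under the two
anchors is isotropic for the pairing on `E ⊕ E*`. -/
def IsotropicAnchors (u v : ι → κ → A) : Prop :=
  ∀ μ ν, ∑ a, (u a μ * v a ν + u a ν * v a μ) = 0

/-- The structure functions `g` with their lower indices contracted with `u` and their upper index
contracted with `v`. -/
def bracketTerm (u v : ι → κ → A) (g : ι → ι → ι → A) (lam μ ν : κ) : A :=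
  ∑ a, ∑ b, u a lam * u b μ * ∑ c, v c ν * g a b c

/-- The 3-tensor on the base obtained by contracting every index of `χ` with `u`. -/
def contract (χ : ι → ι → ι → A) (u : ι → κ → A) (lam μ ν : κ) : A :=
  ∑ a, ∑ b, ∑ c, χ a b c * u a lam * u b μ * u c ν

theorem bivector_comm (u v : ι → κ → A) (μ ν : κ) : bivector u v μ ν = bivector v u ν μ := by
  simp only [bivector, mul_comm]

theorem IsotropicAnchors.symm {u v : ι → κ → A} (h : IsotropicAnchors u v) :
    IsotropicAnchors v u := fun μ ν => by
  simpa only [mul_comm] using h ν μ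

theorem IsotropicAnchors.bivector_swap {u v : ι → κ → A} (h : IsotropicAnchors u v) (μ ν : κ) :
    bivector u v μ ν = -bivector u v ν μ := by
  rw [eq_neg_iff_add_eq_zero, bivector, bivector, ← Finset.sum_add_distrib, h μ ν]

theorem contract_swap_left {χ : ι → ι → ι → A} (hχ : ∀ a b c, χ a b c = -χ b a c)
    (u : ι → κ → A) (lam μ ν : κ) :
    contract χ u lam μ ν = -contract χ u μ lam ν := by
  unfold contract
  rw [Finset.sum_comm]
  simp only [← Finset.sum_neg_distrib]
  exact Finset.sum_congr rfl fun b _ => Finset.sum_congr rfl fun a _ =>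
    Finset.sum_congr rfl fun c _ => by rw [hχ a b c]; ring

theorem contract_rotate {χ : ι → ι → ι → A} (hχ₁ : ∀ a b c, χ a b c = -χ b a c)
    (hχ₂ : ∀ a b c, χ a b c = -χ a c b) (u : ι → κ → A) (lam μ ν : κ) :
    contract χ u lam μ ν = contract χ u μ ν lam := by
  unfold contract
  rw [← Finset.sum_comm_cycle]
  exact Finset.sum_congr rfl fun b _ => Finset.sum_congr rfl fun c _ =>
    Finset.sum_congr rfl fun a _ => by rw [hχ₁ a b c, hχ₂ b a c]; ring

variable [Fintype κ]

/-- The constraint (C1), or dually (C3), at one point of the base: the bracket of the anchor `v`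
with itself is `v` of the bracket with structure functions `g`, up to a correction by the other
anchor `u` and the 3-tensor `χ`. The value of `∂_r v_a^μ` at the point is `dv r a μ`. -/
def AnchorCompatible (v : ι → κ → A) (dv : κ → ι → κ → A) (u : ι → κ → A)
    (g χ : ι → ι → ι → A) : Prop :=
  ∀ a b μ, (∑ r, (v a r * dv r b μ - v b r * dv r a μ)) - (∑ c, v c μ * g a b c)
    + (∑ c, u c μ * χ c a b) = 0

/-- The constraint (C6) at one point of the base, which governs the bracket of `ρ` with `R`. As in
`AnchorCompatible`, the derivatives `∂_r ρ_a^μ` and `∂_r R^{a|μ}` are `dρ r a μ` and `dR r a μ`. -/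
def MixedCompatible (ρ R : ι → κ → A) (dρ dR : κ → ι → κ → A) (f C : ι → ι → ι → A) : Prop :=
  ∀ a b μ, (∑ r, (ρ a r * dR r b μ - R b r * dρ r a μ)) - (∑ c, ρ c μ * C a b c)
    - (∑ c, R c μ * f c a b) = 0

/-- The derivative of the anchor `v` along the vector field `∑ a, u_a^λ v_a`, contracted
with `u`. -/
def derivTerm (u v : ι → κ → A) (dv : κ → ι → κ → A) (lam μ ν : κ) : A :=
  ∑ r, bivector u v lam r * bivector u (dv r) μ ν

theorem sum_bivector_mul_bivector (u v w : ι → κ → A) (dv : κ → ι → κ → A) (lam μ ν : κ) :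
    ∑ r, bivector u v lam r * bivector w (dv r) μ ν
      = ∑ a, ∑ b, u a lam * w b μ * ∑ r, v a r * dv r b ν := by
  simp only [bivector, Finset.sum_mul_sum]
  simp only [Finset.mul_sum]
  rw [← Finset.sum_comm_cycle]
  exact Finset.sum_congr rfl fun a _ => Finset.sum_congr rfl fun b _ =>
    Finset.sum_congr rfl fun r _ => by ring

theorem AnchorCompatible.derivTerm_sub_swap {v : ι → κ → A} {dv : κ → ι → κ → A}
    {u : ι → κ → A} {g χ : ι → ι → ι → A} (h : AnchorCompatible v dv u g χ) (lam μ ν : κ) :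
    derivTerm u v dv lam μ ν - derivTerm u v dv μ lam ν
      = bracketTerm u v g lam μ ν - contract χ u ν lam μ := by
  have contracted : ∑ a, ∑ b, u a lam * u b μ *
      ((∑ r, (v a r * dv r b ν - v b r * dv r a ν)) - (∑ c, v c ν * g a b c)
        + ∑ c, u c ν * χ c a b) = 0 := by
    simp only [h _ _ ν, mul_zero, Finset.sum_const_zero]
  have deriv_swap : ∑ a, ∑ b, u a lam * u b μ * ∑ r, v b r * dv r a ν
      = derivTerm u v dv μ lam ν := by
    rw [derivTerm, sum_bivector_mul_bivector, Finset.sum_comm]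
    simp only [mul_comm (u _ μ)]
  have tensor : ∑ a, ∑ b, u a lam * u b μ * ∑ c, u c ν * χ c a b = contract χ u ν lam μ := by
    simp only [contract, Finset.mul_sum]
    rw [Finset.sum_comm_cycle]
    exact Finset.sum_congr rfl fun c _ => Finset.sum_congr rfl fun a _ =>
      Finset.sum_congr rfl fun b _ => by ring
  simp only [mul_add, mul_sub, Finset.sum_add_distrib, Finset.sum_sub_distrib, deriv_swap,
    tensor, ← sum_bivector_mul_bivector] at contracted
  linear_combination (norm := (unfold derivTerm bracketTerm; ring)) contracted

theorem AnchorCompatible.bracketTerm_swap {v : ι → κ → A} {dv : κ → ι → κ → A}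
    {u : ι → κ → A} {g χ : ι → ι → ι → A} (h : AnchorCompatible v dv u g χ)
    (hχ₁ : ∀ a b c, χ a b c = -χ b a c) (hχ₂ : ∀ a b c, χ a b c = -χ a c b) (lam μ ν : κ) :
    bracketTerm u v g lam μ ν = -bracketTerm u v g μ lam ν := by
  have contract_swap : contract χ u ν lam μ = -contract χ u ν μ lam := by
    rw [contract_rotate hχ₁ hχ₂, contract_swap_left hχ₁, ← contract_rotate hχ₁ hχ₂]
  linear_combination contract_swap - h.derivTerm_sub_swap lam μ ν - h.derivTerm_sub_swap μ lam ν

theorem IsotropicAnchors.sum_bivector_mul_bivector_eq_neg_derivTerm {u v : ι → κ → A}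
    (h : IsotropicAnchors v u) (dv : κ → ι → κ → A) (lam μ ν : κ) :
    ∑ r, bivector v u lam r * bivector u (dv r) μ ν = -derivTerm u v dv lam μ ν := by
  simp only [h.bivector_swap lam, bivector_comm v u _ lam, neg_mul, Finset.sum_neg_distrib,
    derivTerm]

variable {ρ R : ι → κ → A} {dρ dR : κ → ι → κ → A} {f C : ι → ι → ι → A}

theorem MixedCompatible.derivTerm_sub_derivTerm (hmix : MixedCompatible ρ R dρ dR f C)
    (hiso : IsotropicAnchors R ρ) (lam μ ν : κ) :
    derivTerm R ρ dρ ν lam μ - derivTerm ρ R dR lam ν μ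
      = bracketTerm ρ R (fun a b c => C c a b) ν μ lam + bracketTerm R ρ f μ lam ν := by
  have contracted : ∑ a, ∑ b, R a lam * ρ b ν *
      ((∑ r, (ρ a r * dR r b μ - R b r * dρ r a μ))
        - (∑ c, ρ c μ * C a b c) - ∑ c, R c μ * f c a b) = 0 := by
    simp only [hmix _ _ μ, mul_zero, Finset.sum_const_zero]
  have deriv_ρ : ∑ a, ∑ b, R a lam * ρ b ν * ∑ r, R b r * dρ r a μ
      = -derivTerm R ρ dρ ν lam μ := by
    rw [← hiso.symm.sum_bivector_mul_bivector_eq_neg_derivTerm, sum_bivector_mul_bivector,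
      Finset.sum_comm]
    simp only [mul_comm (R _ lam)]
  have bracket_C : ∑ a, ∑ b, R a lam * ρ b ν * ∑ c, ρ c μ * C a b c
      = bracketTerm ρ R (fun a b c => C c a b) ν μ lam := by
    simp only [bracketTerm, Finset.mul_sum]
    rw [← Finset.sum_comm_cycle]
    exact Finset.sum_congr rfl fun b _ => Finset.sum_congr rfl fun c _ =>
      Finset.sum_congr rfl fun a _ => by ring
  have bracket_f : ∑ a, ∑ b, R a lam * ρ b ν * ∑ c, R c μ * f c a b
      = bracketTerm R ρ f μ lam ν := by
    simp only [bracketTerm, Finset.mul_sum]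
    rw [Finset.sum_comm_cycle]
    exact Finset.sum_congr rfl fun c _ => Finset.sum_congr rfl fun a _ =>
      Finset.sum_congr rfl fun b _ => by ring
  simp only [mul_sub, Finset.sum_sub_distrib, deriv_ρ, bracket_C, bracket_f,
    ← sum_bivector_mul_bivector, hiso.sum_bivector_mul_bivector_eq_neg_derivTerm] at contracted
  linear_combination contracted

theorem IsotropicAnchors.sum_bivector_mul_deriv_bivector (hiso : IsotropicAnchors R ρ)
    (lam μ ν : κ) :
    ∑ r, bivector R ρ r lam * (bivector (dR r) ρ μ ν + bivector R (dρ r) μ ν)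
      = derivTerm ρ R dR lam ν μ - derivTerm R ρ dρ lam μ ν := by
  have deriv_R : ∑ r, bivector R ρ r lam * bivector (dR r) ρ μ ν = derivTerm ρ R dR lam ν μ := by
    simp only [derivTerm, bivector_comm ρ]
  have deriv_ρ : ∑ r, bivector R ρ r lam * bivector R (dρ r) μ ν = -derivTerm R ρ dρ lam μ ν := by
    simp only [derivTerm, hiso.bivector_swap _ lam, neg_mul, Finset.sum_neg_distrib]
  rw [sub_eq_add_neg, ← deriv_R, ← deriv_ρ]
  simp only [mul_add, Finset.sum_add_distrib]

variable {φ ψ : ι → ι → ι → A}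

theorem cyclic_sum_bracketTerm
    (hφ₁ : ∀ a b c, φ a b c = -φ b a c) (hφ₂ : ∀ a b c, φ a b c = -φ a c b)
    (hψ₁ : ∀ a b c, ψ a b c = -ψ b a c) (hψ₂ : ∀ a b c, ψ a b c = -ψ a c b)
    (hρ : AnchorCompatible ρ dρ R f ψ)
    (hR : AnchorCompatible R dR ρ (fun a b c => C c a b) φ)
    (hiso : IsotropicAnchors R ρ) (hmix : MixedCompatible ρ R dρ dR f C) (lam μ ν : κ) :
    bracketTerm ρ R (fun a b c => C c a b) lam μ ν + bracketTerm ρ R (fun a b c => C c a b) μ ν lam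
        + bracketTerm ρ R (fun a b c => C c a b) ν lam μ
        + (bracketTerm R ρ f lam μ ν + bracketTerm R ρ f μ ν lam + bracketTerm R ρ f ν lam μ)
      = contract ψ R lam μ ν + contract φ ρ lam μ ν := by
  have mixed := hmix.derivTerm_sub_derivTerm hiso
  linear_combination mixed lam μ ν - mixed ν μ lam
    - hρ.derivTerm_sub_swap ν lam μ - hR.derivTerm_sub_swap ν lam μ
    + hR.bracketTerm_swap hφ₁ hφ₂ μ ν lam + hρ.bracketTerm_swap hψ₁ hψ₂ lam μ ν
    - contract_rotate hφ₁ hφ₂ ρ lam μ ν - contract_rotate hψ₁ hψ₂ R lam μ ν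

theorem cyclic_sum_bivector_mul_deriv_bivector
    (hφ₁ : ∀ a b c, φ a b c = -φ b a c) (hφ₂ : ∀ a b c, φ a b c = -φ a c b)
    (hψ₁ : ∀ a b c, ψ a b c = -ψ b a c) (hψ₂ : ∀ a b c, ψ a b c = -ψ a c b)
    (hρ : AnchorCompatible ρ dρ R f ψ)
    (hR : AnchorCompatible R dR ρ (fun a b c => C c a b) φ)
    (hiso : IsotropicAnchors R ρ) (hmix : MixedCompatible ρ R dρ dR f C) (lam μ ν : κ) :
    ∑ r, (bivector R ρ r lam * (bivector (dR r) ρ μ ν + bivector R (dρ r) μ ν)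
        + bivector R ρ r μ * (bivector (dR r) ρ ν lam + bivector R (dρ r) ν lam)
        + bivector R ρ r ν * (bivector (dR r) ρ lam μ + bivector R (dρ r) lam μ))
      = contract ψ R lam μ ν + contract φ ρ lam μ ν := by
  have mixed := hmix.derivTerm_sub_derivTerm hiso
  have swap_C := hR.bracketTerm_swap hφ₁ hφ₂
  have swap_f := hρ.bracketTerm_swap hψ₁ hψ₂
  simp only [Finset.sum_add_distrib, hiso.sum_bivector_mul_deriv_bivector]
  linear_combination cyclic_sum_bracketTerm hφ₁ hφ₂ hψ₁ hψ₂ hρ hR hiso hmix lam μ ν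
    - mixed lam μ ν - mixed μ ν lam - mixed ν lam μ
    - swap_C ν μ lam - swap_C lam ν μ - swap_C μ lam ν
    - swap_f μ lam ν - swap_f ν μ lam - swap_f lam ν μ

end Pointwise

theorem pd_sum_mul {ι : Type*} [Fintype ι] {m : ℕ} {g h : ι → (Fin m → ℝ) → ℝ} {x : Fin m → ℝ}
    (hg : ∀ i, DifferentiableAt ℝ (g i) x) (hh : ∀ i, DifferentiableAt ℝ (h i) x) (r : Fin m) :
    pd r (fun y => ∑ i, g i y * h i y) x
      = ∑ i, pd r (g i) x * h i x + ∑ i, g i x * pd r (h i) x := by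
  unfold pd
  rw [fderiv_fun_sum fun i _ => (hg i).fun_mul (hh i), sum_apply,
    ← Finset.sum_add_distrib]
  refine Finset.sum_congr rfl fun i _ => ?_
  rw [fderiv_fun_mul (hg i) (hh i), add_apply, smul_apply, smul_apply, smul_eq_mul, smul_eq_mul]
  ring

end ProtoLieBialgebroid

open ProtoLieBialgebroid in
theorem proto_lie_bialgebroid_deformed_jacobi_general {ι : Type*} [Fintype ι] {m : ℕ}
    {ρ R : ι → Fin m → (Fin m → ℝ) → ℝ} {f C φ ψ : ι → ι → ι → (Fin m → ℝ) → ℝ}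
    {x : Fin m → ℝ}
    (hρ : ∀ a μ, DifferentiableAt ℝ (ρ a μ) x) (hR : ∀ a μ, DifferentiableAt ℝ (R a μ) x)
    (hφ₁ : ∀ a b c, φ a b c x = -φ b a c x) (hφ₂ : ∀ a b c, φ a b c x = -φ a c b x)
    (hψ₁ : ∀ a b c, ψ a b c x = -ψ b a c x) (hψ₂ : ∀ a b c, ψ a b c x = -ψ a c b x)
    (hC1 : ∀ a b μ,
      (∑ r, (ρ a r x * pd r (ρ b μ) x - ρ b r x * pd r (ρ a μ) x))
        - (∑ c, ρ c μ x * f a b c x) + (∑ c, R c μ x * ψ c a b x) = 0)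
    (hC3 : ∀ a b μ,
      (∑ r, (R a r x * pd r (R b μ) x - R b r x * pd r (R a μ) x))
        - (∑ c, R c μ x * C c a b x) + (∑ c, ρ c μ x * φ c a b x) = 0)
    (hC5 : ∀ μ ν, ∑ a, (R a μ x * ρ a ν x + R a ν x * ρ a μ x) = 0)
    (hC6 : ∀ a b μ,
      (∑ r, (ρ a r x * pd r (R b μ) x - R b r x * pd r (ρ a μ) x))
        - (∑ c, ρ c μ x * C a b c x) - (∑ c, R c μ x * f c a b x) = 0)
    (lam μ ν : Fin m) :
    ∑ r, ((∑ a, R a r x * ρ a lam x) * pd r (fun y => ∑ a, R a μ y * ρ a ν y) x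
        + (∑ a, R a r x * ρ a μ x) * pd r (fun y => ∑ a, R a ν y * ρ a lam y) x
        + (∑ a, R a r x * ρ a ν x) * pd r (fun y => ∑ a, R a lam y * ρ a μ y) x)
      = ∑ a, ∑ b, ∑ c, (ψ a b c x * R a lam x * R b μ x * R c ν x
          + φ a b c x * ρ a lam x * ρ b μ x * ρ c ν x) := by
  have pd_bivector (r μ ν : Fin m) := pd_sum_mul (fun a => hR a μ) (fun a => hρ a ν) r
  simp only [pd_bivector]
  refine (cyclic_sum_bivector_mul_deriv_bivector hφ₁ hφ₂ hψ₁ hψ₂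
    hC1 hC3 hC5 hC6 lam μ ν).trans ?_
  simp only [contract, Finset.sum_add_distrib]

/-- For a proto-Lie bialgebroid on the trivial rank-`n` bundle over `ℝ^m`, given in
components by anchors `ρ_a^μ`, `R^{a|μ}`, structure functions `f_{ab}^c`, `C_c^{ab}` and
totally antisymmetric `φ^{abc}`, `ψ_{abc}` subject to the constraints (C1)–(C9), the
Jacobi identity for the bivector `π^{μν} := Σ_a R^{a|μ} ρ_a^ν` is deformed as
`π^{ρλ}∂_ρ π^{μν} + cyclic = ψ_{abc} R^{a|λ}R^{b|μ}R^{c|ν} + φ^{abc} ρ_a^λ ρ_b^μ ρ_c^ν`. -/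
theorem proto_lie_bialgebroid_deformed_jacobi
    (m n : ℕ) (hm : 1 ≤ m) (hn : 1 ≤ n)
    (ρ R : Fin n → Fin m → (Fin m → ℝ) → ℝ)
    (f C : Fin n → Fin n → Fin n → (Fin m → ℝ) → ℝ)
    (φ ψ : Fin n → Fin n → Fin n → (Fin m → ℝ) → ℝ)
    (hρ : ∀ a μ, ContDiff ℝ (⊤ : ℕ∞) (ρ a μ)) (hR : ∀ a μ, ContDiff ℝ (⊤ : ℕ∞) (R a μ))
    (hf : ∀ a b c, ContDiff ℝ (⊤ : ℕ∞) (f a b c)) (hC : ∀ c a b, ContDiff ℝ (⊤ : ℕ∞) (C c a b))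
    (hφ : ∀ a b c, ContDiff ℝ (⊤ : ℕ∞) (φ a b c)) (hψ : ∀ a b c, ContDiff ℝ (⊤ : ℕ∞) (ψ a b c))
    (hfanti : ∀ a b c x, f a b c x = - f b a c x)
    (hCanti : ∀ c a b x, C c a b x = - C c b a x)
    (hφanti₁ : ∀ a b c x, φ a b c x = - φ b a c x)
    (hφanti₂ : ∀ a b c x, φ a b c x = - φ a c b x)
    (hψanti₁ : ∀ a b c x, ψ a b c x = - ψ b a c x)
    (hψanti₂ : ∀ a b c x, ψ a b c x = - ψ a c b x)
    -- (C1)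
    (hC1 : ∀ a b μ x,
      (∑ lam : Fin m, (ρ a lam x * pd lam (ρ b μ) x - ρ b lam x * pd lam (ρ a μ) x))
        - (∑ c : Fin n, ρ c μ x * f a b c x) + (∑ c : Fin n, R c μ x * ψ c a b x) = 0)
    -- (C2)
    (hC2 : ∀ a b c d x,
      alt3 (fun a' b' c' =>
        (∑ lam : Fin m, ρ a' lam x * pd lam (f b' c' d) x)
          - (∑ e : Fin n, f e a' d x * f b' c' e x)
          + (3 : ℝ)⁻¹ * (∑ lam : Fin m, R d lam x * pd lam (ψ a' b' c') x)
          - (∑ e : Fin n, ψ e a' b' x * C c' e d x)) a b c = 0)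
    -- (C3)
    (hC3 : ∀ a b μ x,
      (∑ lam : Fin m, (R a lam x * pd lam (R b μ) x - R b lam x * pd lam (R a μ) x))
        - (∑ c : Fin n, R c μ x * C c a b x) + (∑ c : Fin n, ρ c μ x * φ c a b x) = 0)
    -- (C4)
    (hC4 : ∀ a b c d x,
      alt3 (fun a' b' c' =>
        (∑ lam : Fin m, R a' lam x * pd lam (C d b' c') x)
          - (∑ e : Fin n, C d e a' x * C e b' c' x)
          + (3 : ℝ)⁻¹ * (∑ lam : Fin m, ρ d lam x * pd lam (φ a' b' c') x)
          - (∑ e : Fin n, φ e a' b' x * f e d c' x)) a b c = 0)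
    -- (C5)
    (hC5 : ∀ μ ν x, ∑ a : Fin n, (R a μ x * ρ a ν x + R a ν x * ρ a μ x) = 0)
    -- (C6)
    (hC6 : ∀ a b μ x,
      (∑ lam : Fin m, (ρ a lam x * pd lam (R b μ) x - R b lam x * pd lam (ρ a μ) x))
        - (∑ c : Fin n, ρ c μ x * C a b c x) - (∑ c : Fin n, R c μ x * f c a b x) = 0)
    -- (C7)
    (hC7 : ∀ a b c d x,
      alt2 (fun a' b' => ∑ lam : Fin m, ρ a' lam x * pd lam (C b' c d) x) a b
        + alt2 (fun c' d' => ∑ lam : Fin m, R c' lam x * pd lam (f a b d') x) c d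
        + 2 * alt2 (fun a' b' =>
            alt2 (fun c' d' => ∑ e : Fin n, f e a' c' x * C b' d' e x) c d) a b
        - (2 : ℝ)⁻¹ * (∑ e : Fin n, f a b e x * C e c d x)
        - (2 : ℝ)⁻¹ * (∑ e : Fin n, ψ e a b x * φ e c d x) = 0)
    -- (C8)
    (hC8 : ∀ a b c d x,
      alt4 (fun a' b' c' d' =>
        (3 : ℝ)⁻¹ * (∑ lam : Fin m, R d' lam x * pd lam (φ a' b' c') x)
          + (2 : ℝ)⁻¹ * (∑ e : Fin n, φ e a' b' x * C e c' d' x)) a b c d = 0)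
    -- (C9)
    (hC9 : ∀ a b c d x,
      alt4 (fun a' b' c' d' =>
        (3 : ℝ)⁻¹ * (∑ lam : Fin m, ρ d' lam x * pd lam (ψ a' b' c') x)
          + (2 : ℝ)⁻¹ * (∑ e : Fin n, ψ e a' b' x * f c' d' e x)) a b c d = 0) :
    -- deformed Jacobi identity for π^{μν} := Σ_a R^{a|μ} ρ_a^ν
    ∀ lam μ ν x,
      ∑ r : Fin m,
        ((∑ a : Fin n, R a r x * ρ a lam x)
            * pd r (fun y => ∑ a : Fin n, R a μ y * ρ a ν y) x
          + (∑ a : Fin n, R a r x * ρ a μ x)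
            * pd r (fun y => ∑ a : Fin n, R a ν y * ρ a lam y) x
          + (∑ a : Fin n, R a r x * ρ a ν x)
            * pd r (fun y => ∑ a : Fin n, R a lam y * ρ a μ y) x)
      = ∑ a : Fin n, ∑ b : Fin n, ∑ c : Fin n,
          (ψ a b c x * R a lam x * R b μ x * R c ν x
            + φ a b c x * ρ a lam x * ρ b μ x * ρ c ν x) :=
  fun lam μ ν x => proto_lie_bialgebroid_deformed_jacobi_general
    (fun a μ => (hρ a μ).differentiable (by simp) x)
    (fun a μ => (hR a μ).differentiable (by simp) x)
    (hφanti₁ · · · x) (hφanti₂ · · · x) (hψanti₁ · · · x) (hψanti₂ · · · x)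
    (hC1 · · · x) (hC3 · · · x) (hC5 · · x) (hC6 · · · x) lam μ ν
end
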